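/- Let p be a probability distribution on a finite set S of size |S| ≥ 2, and let m = max_s p(s) denote its largest value. Then the Shannon entropy satisfies H(p) ≤ m·(-log m) + (1 - m)·log((|S| - 1)/(1 - m)) when m < 1, i.e., the entropy is maximized, given the maximal mass m, by spreading the remaining mass uniformly over the other |S| - 1 elements. -/

import Mathlib

noncomputable def shannonEntropy {X : Type*} [Fintype X] (p : X → ℝ) : ℝ :=
  -∑ x, p x * Real.log (p x)

/-!
Split off the term of a point `a` from the entropy. The other `|S| - 1` terms carry total mass
`1 - p a`, and by Jensen's inequality for the concave function `x ↦ -x log x` their sum is largest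
when this mass is spread uniformly.
-/

open Finset Real

lemma shannonEntropy_eq_sum_negMulLog {X : Type*} [Fintype X] (p : X → ℝ) :
    shannonEntropy p = ∑ x, negMulLog (p x) := by
  simp only [shannonEntropy, negMulLog, neg_mul, sum_neg_distrib]

lemma sum_le_card_mul_average_of_concaveOn {𝕜 ι : Type*} [Field 𝕜] [LinearOrder 𝕜]
    [IsStrictOrderedRing 𝕜] {D : Set 𝕜} {φ : 𝕜 → 𝕜} (hφ : ConcaveOn 𝕜 D φ)
    {t : Finset ι} (ht : t.Nonempty) {f : ι → 𝕜} (hf : ∀ i ∈ t, f i ∈ D) :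
    ∑ i ∈ t, φ (f i) ≤ #t * φ ((∑ i ∈ t, f i) / #t) := by
  have hcard : (0 : 𝕜) < #t := by exact_mod_cast ht.card_pos
  have hweights : ∑ _i ∈ t, (#t : 𝕜)⁻¹ = 1 := by
    rw [sum_const, nsmul_eq_mul, mul_inv_cancel₀ hcard.ne']
  have jensen : ∑ i ∈ t, (#t : 𝕜)⁻¹ • φ (f i) ≤ φ (∑ i ∈ t, (#t : 𝕜)⁻¹ • f i) :=
    hφ.le_map_sum (fun _ _ ↦ inv_nonneg.2 hcard.le) hweights hf
  rwa [← smul_sum, ← smul_sum, smul_eq_mul, smul_eq_mul, inv_mul_le_iff₀ hcard,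
    inv_mul_eq_div] at jensen

lemma mul_negMulLog_div {c : ℝ} (hc : c ≠ 0) (x : ℝ) :
    c * negMulLog (x / c) = x * log (c / x) := by
  rw [negMulLog, ← inv_div x c, log_inv]
  field_simp

lemma sum_negMulLog_le_sum_mul_log {ι : Type*} {t : Finset ι} (ht : t.Nonempty)
    {f : ι → ℝ} (hf : ∀ i ∈ t, 0 ≤ f i) :
    ∑ i ∈ t, negMulLog (f i) ≤ (∑ i ∈ t, f i) * log (#t / ∑ i ∈ t, f i) := by
  rw [← mul_negMulLog_div (Nat.cast_ne_zero.2 ht.card_ne_zero)]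
  exact sum_le_card_mul_average_of_concaveOn concaveOn_negMulLog ht hf

theorem entropy_le_maxMass_bound_general {S : Type*} [Fintype S] (p : S → ℝ)
    (hp0 : ∀ s, 0 ≤ p s) (hp1 : ∑ s, p s = 1) (a : S) (ha : p a < 1) :
    shannonEntropy p ≤
      p a * (-log (p a)) + (1 - p a) * log ((Fintype.card S - 1) / (1 - p a)) := by
  classical
  have hmass : ∑ s ∈ univ.erase a, p s = 1 - p a := by
    rw [sum_erase_eq_sub (mem_univ a), hp1]
  have hcard : (#(univ.erase a) : ℝ) = Fintype.card S - 1 :=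
    cast_card_erase_of_mem (mem_univ a)
  have hne : (univ.erase a).Nonempty :=
    nonempty_of_sum_ne_zero (hmass.trans_ne (sub_pos.2 ha).ne')
  calc shannonEntropy p
      = negMulLog (p a) + ∑ s ∈ univ.erase a, negMulLog (p s) := by
        rw [shannonEntropy_eq_sum_negMulLog, add_sum_erase _ (fun s ↦ negMulLog (p s)) (mem_univ a)]
    _ ≤ negMulLog (p a) + (1 - p a) * log ((Fintype.card S - 1) / (1 - p a)) := by
        rw [← hmass, ← hcard]
        gcongr
        exact sum_negMulLog_le_sum_mul_log hne fun s _ ↦ hp0 s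
    _ = p a * (-log (p a)) + (1 - p a) * log ((Fintype.card S - 1) / (1 - p a)) := by
        rw [negMulLog, neg_mul_comm]

theorem entropy_le_maxMass_bound {S : Type*} [Fintype S] [Nonempty S] (p : S → ℝ)
    (hp0 : ∀ s, 0 ≤ p s) (hp1 : ∑ s, p s = 1)
    (hcard : 2 ≤ Fintype.card S)
    (m : ℝ) (hm : m = Finset.univ.sup' Finset.univ_nonempty p)
    (hm0 : 0 < m) (hm1 : m < 1) :
    shannonEntropy p ≤
      m * (-Real.log m) +
        (1 - m) * Real.log ((Fintype.card S - 1) / (1 - m)) := by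
  obtain ⟨a, -, ha⟩ := Finset.exists_mem_eq_sup' Finset.univ_nonempty p
  obtain rfl : m = p a := hm.trans ha
  exact entropy_le_maxMass_bound_general p hp0 hp1 a hm1
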